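/- The triangle group T(2,3,5) is isomorphic (as a group) to the alternating group A_5, the alternating group on a five-element set. -/

import Mathlib

/-- Relator set of the triangle group `T(a,b,c)`: the relators `x^a`, `y^b`, `z^c`
and `x·y·z` in the free group on three generators `x, y, z`. -/
def TriangleRels (a b c : ℕ) : Set (FreeGroup (Fin 3)) :=
  {FreeGroup.of 0 ^ a, FreeGroup.of 1 ^ b, FreeGroup.of 2 ^ c,
    FreeGroup.of 0 * FreeGroup.of 1 * FreeGroup.of 2}

/-- The triangle group `T(a,b,c)`. -/
abbrev TriangleGroup (a b c : ℕ) : Type :=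
  PresentedGroup (TriangleRels a b c)

/-!
Let `x`, `y`, `z` generate `G` subject to `x² = y³ = z⁵ = x y z = 1`. As in the rotation group of
the icosahedron, where `z` fixes a vertex, the cosets of `⟨z⟩` behave like the twelve vertices: the
base point, two `⟨z⟩`-orbits of at most five points each, and an antipode are together stable under
`x` and `z`, so `|G| ≤ 12 · 5 = 60`. On the other hand `A₅` contains such a triple whose entries
have orders exactly `2`, `3`, `5`. The triple generates a subgroup of index at most two, which is
all of `A₅` by simplicity. Hence `T(2,3,5)` maps onto `A₅` and has at most as many elements.
-/

open MulAction Subgroup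
open scoped Pointwise

theorem eq_top_of_index_dvd_two {G : Type*} [Group G] [IsSimpleGroup G] (hG : Nat.card G ≠ 2)
    {H : Subgroup G} (hH : H.index ∣ 2) : H = ⊤ := by
  rcases (Nat.dvd_prime Nat.prime_two).1 hH with hone | htwo
  · exact index_eq_one.1 hone
  · refine (normal_of_index_eq_two htwo).eq_bot_or_eq_top.resolve_left ?_
    rintro rfl
    exact hG (index_bot.symm.trans htwo)

section FiniteStableSets

variable {G α : Type*} [Group G] [MulAction G α]

theorem eq_univ_of_forall_smul_mem [IsPretransitive G α] {T : Set G} (hT : closure T = ⊤)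
    {S : Set α} (hfin : S.Finite) (hne : S.Nonempty) (hS : ∀ g ∈ T, ∀ a ∈ S, g • a ∈ S) :
    S = Set.univ := by
  have hstab : stabilizer G S = ⊤ := by
    rw [eq_top_iff, ← hT, closure_le]
    exact fun g hg ↦ (mem_stabilizer_set' hfin).2 (fun {a} ha ↦ hS g hg a ha)
  obtain ⟨a, ha⟩ := hne
  refine Set.eq_univ_of_forall fun b ↦ ?_
  obtain ⟨g, rfl⟩ := exists_smul_eq G a b
  exact (mem_stabilizer_set.1 (hstab ▸ mem_top g) a).2 ha

theorem orbit_subgroup_eq_image (H : Subgroup G) (a : α) : orbit H a = (· • a) '' (H : Set G) :=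
  (Set.image_eq_range (· • a) (H : Set G)).symm

variable {n : ℕ} [NeZero n] {g : G}

theorem zpowers_eq_range_fin_pow (hg : g ^ n = 1) :
    (zpowers g : Set G) = Set.range fun i : Fin n ↦ g ^ (i : ℕ) := by
  have hfin : IsOfFinOrder g := isOfFinOrder_iff_pow_eq_one.2 ⟨n, NeZero.pos n, hg⟩
  ext a
  rw [SetLike.mem_coe, ← hfin.mem_powers_iff_mem_zpowers]
  constructor
  · rintro ⟨k, rfl⟩
    exact ⟨Fin.ofNat n k, (pow_eq_pow_mod k hg).symm⟩
  · rintro ⟨i, rfl⟩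
    exact ⟨i, rfl⟩

theorem encard_zpowers_le (hg : g ^ n = 1) : (zpowers g : Set G).encard ≤ n := by
  rw [zpowers_eq_range_fin_pow hg, ← Set.image_univ]
  exact (Set.encard_image_le _ _).trans_eq (by simp)

theorem orbit_zpowers_eq_range_fin_pow_smul (hg : g ^ n = 1) (a : α) :
    orbit (zpowers g) a = Set.range fun i : Fin n ↦ g ^ (i : ℕ) • a := by
  rw [orbit_subgroup_eq_image, zpowers_eq_range_fin_pow hg, ← Set.range_comp]
  rfl

theorem encard_orbit_zpowers_le (hg : g ^ n = 1) (a : α) :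
    (orbit (zpowers g) a).encard ≤ n := by
  rw [orbit_subgroup_eq_image]
  exact (Set.encard_image_le _ _).trans (encard_zpowers_le hg)

end FiniteStableSets

/-- An `(a, b, c)`-triple in a group: elements satisfying the defining relations of `T(a,b,c)`.
The orders of `x`, `y`, `z` may be proper divisors of `a`, `b`, `c`. -/
structure IsTriangleTriple {G : Type*} [Group G] (a b c : ℕ) (x y z : G) : Prop where
  pow_left_eq_one : x ^ a = 1
  pow_middle_eq_one : y ^ b = 1
  pow_right_eq_one : z ^ c = 1
  mul_mul_eq_one : x * y * z = 1

/-- The orbit of a vertex `v` of the icosahedron under its rotation group, for `z` a rotation by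
`2π/5` about `v` and `x` the half-turn about an edge at `v`: the vertex itself, its five neighbours,
the five neighbours of its antipode, and the antipode. It is defined for elements `x`, `z` of any
group acting on any type. -/
def icosahedronVertices {G α : Type*} [Group G] [MulAction G α] (x z : G) (v : α) : Set α :=
  {v} ∪ orbit (zpowers z) (x • v) ∪ orbit (zpowers z) (x • z ^ 2 • x • v) ∪
    {x • z ^ 3 • x • z ^ 2 • x • v}

theorem encard_icosahedronVertices_le {G α : Type*} [Group G] [MulAction G α] {n : ℕ} [NeZero n]
    {z : G} (hz : z ^ n = 1) (x : G) (v : α) :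
    (icosahedronVertices x z v).encard ≤ 1 + n + n + 1 := by
  have horbit (p : α) : (orbit (zpowers z) p).encard ≤ n := encard_orbit_zpowers_le hz p
  unfold icosahedronVertices
  grw [Set.encard_union_le, Set.encard_union_le, Set.encard_union_le, horbit, horbit,
    Set.encard_singleton, Set.encard_singleton]

namespace IsTriangleTriple

variable {G : Type*} [Group G] {x y z : G}

theorem closure_left_right {a b c : ℕ} (h : IsTriangleTriple a b c x y z) :
    closure {x, z} = closure {x, y, z} := by
  refine le_antisymm (closure_mono (by grind)) ((closure_le _).2 ?_)
  have hx : x ∈ closure {x, z} := subset_closure (by simp)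
  have hz : z ∈ closure {x, z} := subset_closure (by simp)
  have hy : y = x⁻¹ * z⁻¹ := by
    rw [eq_inv_mul_iff_mul_eq, eq_inv_iff_mul_eq_one, h.mul_mul_eq_one]
  rintro _ (rfl | rfl | rfl)
  exacts [hx, hy ▸ mul_mem (inv_mem hx) (inv_mem hz), hz]

theorem mul_inv_mul {c : ℕ} (h : IsTriangleTriple 2 3 c x y z) : x * z⁻¹ * x = z * x * z := by
  have hx : x = x⁻¹ := eq_inv_of_mul_eq_one_left (by rw [← sq, h.pow_left_eq_one])
  have hzx : (z * x) ^ 3 = 1 := by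
    have hy : z * x = y⁻¹ := eq_inv_of_mul_eq_one_left (by
      rw [mul_assoc, mul_eq_one_iff_eq_inv', eq_inv_iff_mul_eq_one, h.mul_mul_eq_one])
    rw [hy, inv_pow, h.pow_middle_eq_one, inv_one]
  calc x * z⁻¹ * x = (z * x) ^ 3 * (x⁻¹ * z⁻¹ * x⁻¹) := by rw [hzx, one_mul, ← hx]
    _ = z * x * z := by simp [pow_succ, mul_assoc]

section IcosahedronVertices

variable {α : Type*} [MulAction G α] {v : α}

theorem left_smul_left_smul {b c : ℕ} (h : IsTriangleTriple 2 b c x y z) (p : α) :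
    x • x • p = p := by
  rw [smul_smul, ← sq, h.pow_left_eq_one, one_smul]

theorem smul_pow_four_smul (h : IsTriangleTriple 2 3 5 x y z) (p : α) :
    x • z ^ 4 • x • p = z • x • z • p := by
  have hz : z ^ 4 = z⁻¹ := eq_inv_of_mul_eq_one_left (by rw [← pow_succ, h.pow_right_eq_one])
  simpa only [mul_smul, hz] using congr_arg (· • p) h.mul_inv_mul

theorem smul_pow_three_smul (h : IsTriangleTriple 2 3 5 x y z) (p : α) :
    x • z ^ 3 • x • p = z • x • z ^ 2 • x • z • p := by
  have hz : z ^ 3 = z ^ 4 * z ^ 4 := by rw [← pow_add, pow_eq_pow_mod (4 + 4) h.pow_right_eq_one]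
  calc x • z ^ 3 • x • p = x • z ^ 4 • x • x • z ^ 4 • x • p := by
        rw [h.left_smul_left_smul, hz, mul_smul]
    _ = z • x • z • z • x • z • p := by rw [h.smul_pow_four_smul, h.smul_pow_four_smul]
    _ = z • x • z ^ 2 • x • z • p := by rw [sq, mul_smul]

theorem smul_pow_four_smul_pow_two_smul (h : IsTriangleTriple 2 3 5 x y z) (hv : z • v = v) :
    x • z ^ 4 • x • z ^ 2 • x • v = z ^ 2 • x • z ^ 2 • x • v := by
  calc x • z ^ 4 • x • z ^ 2 • x • v = z • x • z • z ^ 2 • x • v := h.smul_pow_four_smul _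
    _ = z • x • z ^ 3 • x • v := by rw [pow_succ' z 2, mul_smul]
    _ = z • z • x • z ^ 2 • x • v := by rw [h.smul_pow_three_smul, hv]
    _ = z ^ 2 • x • z ^ 2 • x • v := by rw [sq, mul_smul, mul_smul]

theorem right_smul_antipode (h : IsTriangleTriple 2 3 5 x y z) (hv : z • v = v) :
    z • x • z ^ 3 • x • z ^ 2 • x • v = x • z ^ 3 • x • z ^ 2 • x • v := by
  symm
  calc x • z ^ 3 • x • z ^ 2 • x • v = z • x • z ^ 2 • x • z • z ^ 2 • x • v :=
        h.smul_pow_three_smul _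
    _ = z • x • z ^ 2 • x • z ^ 3 • x • v := by rw [pow_succ' z 2, mul_smul]
    _ = z • x • z ^ 2 • z • x • z ^ 2 • x • v := by rw [h.smul_pow_three_smul, hv]
    _ = z • x • z ^ 3 • x • z ^ 2 • x • v := by rw [pow_succ z 2, mul_smul]

theorem right_smul_mem_icosahedronVertices (h : IsTriangleTriple 2 3 5 x y z) (hv : z • v = v)
    {p : α} (hp : p ∈ icosahedronVertices x z v) : z • p ∈ icosahedronVertices x z v := by
  have horbit {p q : α} (hp : p ∈ orbit (zpowers z) q) : z • p ∈ orbit (zpowers z) q :=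
    mem_orbit_of_mem_orbit (⟨z, mem_zpowers z⟩ : zpowers z) hp
  rcases hp with ((rfl | hp) | hp) | rfl
  · exact .inl (.inl (.inl hv))
  · exact .inl (.inl (.inr (horbit hp)))
  · exact .inl (.inr (horbit hp))
  · exact .inr (h.right_smul_antipode hv)

theorem left_smul_mem_icosahedronVertices (h : IsTriangleTriple 2 3 5 x y z) (hv : z • v = v)
    {p : α} (hp : p ∈ icosahedronVertices x z v) : x • p ∈ icosahedronVertices x z v := by
  -- `x` exchanges the twelve points in six pairs, so one relation per pair suffices.
  have hflip {p q : α} (hpq : x • p = q) : x • q = p := hpq ▸ h.left_smul_left_smul p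
  have hu₄ : x • z ^ 4 • x • v = z • x • v := by rw [h.smul_pow_four_smul, hv]
  have hu₃ : x • z ^ 3 • x • v = z • x • z ^ 2 • x • v := by rw [h.smul_pow_three_smul, hv]
  have hu'₄ : x • z ^ 4 • x • z ^ 2 • x • v = z ^ 2 • x • z ^ 2 • x • v :=
    h.smul_pow_four_smul_pow_two_smul hv
  have hbase : v ∈ icosahedronVertices x z v := .inl (.inl (.inl rfl))
  have hnear (k : ℕ) : z ^ k • x • v ∈ icosahedronVertices x z v :=
    .inl (.inl (.inr ⟨⟨z ^ k, npow_mem_zpowers z k⟩, rfl⟩))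
  have hfar (k : ℕ) : z ^ k • x • z ^ 2 • x • v ∈ icosahedronVertices x z v :=
    .inl (.inr ⟨⟨z ^ k, npow_mem_zpowers z k⟩, rfl⟩)
  rcases hp with ((rfl | hp) | hp) | rfl
  · simpa using hnear 0
  · rw [orbit_zpowers_eq_range_fin_pow_smul h.pow_right_eq_one] at hp
    obtain ⟨i, rfl⟩ := hp
    fin_cases i
    · simpa [h.left_smul_left_smul] using hbase
    · simpa [hflip hu₄] using hnear 4
    · simpa using hfar 0
    · simpa [hu₃] using hfar 1
    · simpa [hu₄] using hnear 1
  · rw [orbit_zpowers_eq_range_fin_pow_smul h.pow_right_eq_one] at hp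
    obtain ⟨i, rfl⟩ := hp
    fin_cases i
    · simpa [h.left_smul_left_smul] using hnear 2
    · simpa [hflip hu₃] using hnear 3
    · simpa [hflip hu'₄] using hfar 4
    · exact .inr rfl
    · simpa [hu'₄] using hfar 2
  · rw [h.left_smul_left_smul]
    exact hfar 3

theorem enatCard_le_twelve [IsPretransitive G α] (h : IsTriangleTriple 2 3 5 x y z)
    (hgen : closure {x, y, z} = ⊤) (hv : z • v = v) : ENat.card α ≤ 12 := by
  have hcard : (icosahedronVertices x z v).encard ≤ 12 :=
    (encard_icosahedronVertices_le h.pow_right_eq_one x v).trans_eq (by norm_num)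
  have hfin : (icosahedronVertices x z v).Finite := Set.finite_of_encard_le_coe hcard
  have huniv : icosahedronVertices x z v = Set.univ := by
    refine eq_univ_of_forall_smul_mem (h.closure_left_right.trans hgen) hfin
      ⟨v, by simp [icosahedronVertices]⟩ ?_
    rintro _ (rfl | rfl) p hp
    exacts [h.left_smul_mem_icosahedronVertices hv hp, h.right_smul_mem_icosahedronVertices hv hp]
  rwa [huniv, Set.encard_univ] at hcard

end IcosahedronVertices

theorem enatCard_le_sixty (h : IsTriangleTriple 2 3 5 x y z) (hgen : closure {x, y, z} = ⊤) :
    ENat.card G ≤ 60 := by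
  have hfix : z • ((1 : G) : G ⧸ zpowers z) = (1 : G) := by
    rw [MulAction.Quotient.smul_coe, QuotientGroup.eq]
    simp
  calc ENat.card G = ENat.card (G ⧸ zpowers z) * ENat.card (zpowers z) := by
        rw [ENat.card_congr groupEquivQuotientProdSubgroup, ENat.card_prod]
    _ ≤ 12 * 5 :=
        mul_le_mul' (h.enatCard_le_twelve hgen hfix) (encard_zpowers_le h.pow_right_eq_one)
    _ = 60 := by norm_num

theorem thirty_dvd_natCard_closure (h : IsTriangleTriple 2 3 5 x y z) (hx : x ≠ 1) (hy : y ≠ 1)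
    (hz : z ≠ 1) : 30 ∣ Nat.card (closure {x, y, z}) := by
  have htwo : 2 ∣ Nat.card (closure {x, y, z}) :=
    orderOf_eq_prime h.pow_left_eq_one hx ▸ orderOf_dvd_natCard _ (subset_closure (by simp))
  have hthree : 3 ∣ Nat.card (closure {x, y, z}) :=
    orderOf_eq_prime h.pow_middle_eq_one hy ▸ orderOf_dvd_natCard _ (subset_closure (by simp))
  have : Fact (Nat.Prime 5) := ⟨Nat.prime_five⟩
  have hfive : 5 ∣ Nat.card (closure {x, y, z}) :=
    orderOf_eq_prime h.pow_right_eq_one hz ▸ orderOf_dvd_natCard _ (subset_closure (by simp))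
  lia

end IsTriangleTriple

namespace TriangleGroup

variable {a b c : ℕ}

theorem isTriangleTriple_of (a b c : ℕ) : IsTriangleTriple a b c
    (PresentedGroup.of 0 : TriangleGroup a b c) (PresentedGroup.of 1) (PresentedGroup.of 2) := by
  constructor <;> exact PresentedGroup.one_of_mem (by simp [TriangleRels])

theorem closure_of_eq_top (a b c : ℕ) : closure {(PresentedGroup.of 0 : TriangleGroup a b c),
    PresentedGroup.of 1, PresentedGroup.of 2} = ⊤ := by
  rw [← PresentedGroup.closure_range_of]
  congr 1
  ext g
  simp [Fin.exists_fin_succ, eq_comm]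

variable {G : Type*} [Group G] {x y z : G}

/-- The homomorphism from `T(a,b,c)` determined by an `(a, b, c)`-triple: the universal property of
the triangle group. -/
def lift (h : IsTriangleTriple a b c x y z) : TriangleGroup a b c →* G :=
  PresentedGroup.toGroup (f := ![x, y, z]) <| by
    rintro _ (rfl | rfl | rfl | rfl)
    · simp [h.pow_left_eq_one]
    · simp [h.pow_middle_eq_one]
    · simp [h.pow_right_eq_one]
    · simp [h.mul_mul_eq_one]

theorem closure_le_range_lift (h : IsTriangleTriple a b c x y z) :
    closure {x, y, z} ≤ (lift h).range := by
  rw [closure_le]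
  rintro _ (rfl | rfl | rfl)
  exacts [⟨PresentedGroup.of 0, PresentedGroup.toGroup.of _⟩,
    ⟨PresentedGroup.of 1, PresentedGroup.toGroup.of _⟩,
    ⟨PresentedGroup.of 2, PresentedGroup.toGroup.of _⟩]

end TriangleGroup

section AlternatingGroup

open Equiv Equiv.Perm

theorem natCard_alternatingGroup_five : Nat.card (alternatingGroup (Fin 5)) = 60 := by
  rw [nat_card_alternatingGroup, Nat.card_fin]
  rfl

theorem alternatingGroup_five_eq_top_of_thirty_dvd {H : Subgroup (alternatingGroup (Fin 5))}
    (hH : 30 ∣ Nat.card H) : H = ⊤ := by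
  refine eq_top_of_index_dvd_two (by rw [natCard_alternatingGroup_five]; decide) ?_
  have hcard : Nat.card H * H.index = 30 * 2 := by
    rw [card_mul_index, natCard_alternatingGroup_five]
  exact Nat.dvd_of_mul_dvd_mul_left (by decide) (hcard ▸ mul_dvd_mul_right hH H.index)

theorem exists_isTriangleTriple_alternatingGroup_five : ∃ x y z : alternatingGroup (Fin 5),
    IsTriangleTriple 2 3 5 x y z ∧ x ≠ 1 ∧ y ≠ 1 ∧ z ≠ 1 := by
  refine ⟨⟨c[0, 1] * c[2, 3], mem_alternatingGroup.2 (by decide)⟩,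
    ⟨c[0, 4, 2], mem_alternatingGroup.2 (by decide)⟩,
    ⟨c[0, 1, 2, 3, 4], mem_alternatingGroup.2 (by decide)⟩, ⟨?_, ?_, ?_, ?_⟩, ?_, ?_, ?_⟩ <;>
  decide +kernel

end AlternatingGroup

/-- The triangle group `T(2,3,5)` is isomorphic to the alternating group `A₅`. -/
theorem triangleGroup_two_three_five_iso_A5 :
    Nonempty (TriangleGroup 2 3 5 ≃* alternatingGroup (Fin 5)) := by
  obtain ⟨x, y, z, h, hx, hy, hz⟩ := exists_isTriangleTriple_alternatingGroup_five
  have hgen : closure {x, y, z} = ⊤ :=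
    alternatingGroup_five_eq_top_of_thirty_dvd (h.thirty_dvd_natCard_closure hx hy hz)
  have hsurj : Function.Surjective (TriangleGroup.lift h) :=
    MonoidHom.range_eq_top.1 <| top_le_iff.1 <| hgen ▸ TriangleGroup.closure_le_range_lift h
  have hcard : ENat.card (TriangleGroup 2 3 5) ≤ 60 :=
    (TriangleGroup.isTriangleTriple_of 2 3 5).enatCard_le_sixty
      (TriangleGroup.closure_of_eq_top 2 3 5)
  have : Finite (TriangleGroup 2 3 5) :=
    ENat.card_lt_top.1 (hcard.trans_lt (ENat.natCast_lt_top 60))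
  have hle : Nat.card (TriangleGroup 2 3 5) ≤ Nat.card (alternatingGroup (Fin 5)) := by
    rw [natCard_alternatingGroup_five]
    exact_mod_cast ENat.card_eq_coe_natCard (TriangleGroup 2 3 5) ▸ hcard
  exact ⟨.ofBijective (TriangleGroup.lift h) (hsurj.bijective_of_nat_card_le hle)⟩
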